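/- arXiv:2201.00847 — 3 statements merged into one kernel-verified Lean document; each statement's English description precedes it below -/
import Mathlib

section
/- Let R be a Noetherian local ring, n a positive integer, and M a non-zero finite R-module with grade_R(M) > n. Then T_n^C(M) = Tr_C(Ω^{n-1}M) is not a G_C-perfect R-module, and grade_R(T_n^C(M)) = 0. -/
open CategoryTheory TensorProduct

noncomputable section

universe u

variable (R : Type u) [CommRing R]

/-- The `i`-th Ext module `Ext_R^i(M, N)`. -/
def ExtM (M N : ModuleCat.{u} R) (i : ℕ) : ModuleCat.{u} R :=
  ((Ext R (ModuleCat.{u} R) i).obj (Opposite.op M)).obj N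

/-- The `i`-th Tor module `Tor_i^R(M, N)`. -/
def TorM (M N : ModuleCat.{u} R) (i : ℕ) : ModuleCat.{u} R :=
  ((Tor (ModuleCat.{u} R) i).obj M).obj N

/-- The biduality (evaluation) map `M → Hom_R(Hom_R(M, C), C)`. -/
def bidualityMap (C M : ModuleCat.{u} R) :
    ↥M →ₗ[R] ((↥M →ₗ[R] ↥C) →ₗ[R] ↥C) :=
  (LinearMap.id : (↥M →ₗ[R] ↥C) →ₗ[R] (↥M →ₗ[R] ↥C)).flip

/-- `C` is a semidualizing `R`-module. -/
def IsSemidualizing (C : ModuleCat.{u} R) : Prop :=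
  Module.Finite R ↥C ∧
  Function.Bijective (fun r : R => (r • LinearMap.id : ↥C →ₗ[R] ↥C)) ∧
  ∀ i : ℕ, 0 < i → Subsingleton (ExtM R C C i)

/-- `M` is totally `C`-reflexive. -/
def IsTotallyCReflexive (C M : ModuleCat.{u} R) : Prop :=
  Module.Finite R ↥M ∧
  Function.Bijective (bidualityMap R C M) ∧
  (∀ i : ℕ, 0 < i → Subsingleton (ExtM R M C i)) ∧
  (∀ i : ℕ, 0 < i → Subsingleton (ExtM R (ModuleCat.of R (↥M →ₗ[R] ↥C)) C i))

/-- `G_C`-dimension of `M` is at most `n`: there is an exact sequence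
`0 → X_n → ⋯ → X_0 → M → 0` with each `X_i` totally `C`-reflexive. -/
def gcdimLE (C : ModuleCat.{u} R) : ℕ → ModuleCat.{u} R → Prop
  | 0, M => IsTotallyCReflexive R C M
  | n+1, M => ∃ (X K : ModuleCat.{u} R) (f : ↥K →ₗ[R] ↥X) (g : ↥X →ₗ[R] ↥M),
      Function.Injective f ∧ Function.Surjective g ∧
      LinearMap.ker g = LinearMap.range f ∧
      IsTotallyCReflexive R C X ∧ gcdimLE C n K

/-- The `G_C`-dimension of `M`, as an element of `ℕ∞`. -/
def gcdim (C M : ModuleCat.{u} R) : ℕ∞ :=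
  sInf ((fun n : ℕ => (n : ℕ∞)) '' {n | gcdimLE R C n M})

/-- `grade_R(M) = inf { i | Ext_R^i(M, R) ≠ 0 }`, with `grade 0 = ∞`. -/
def gradeR (M : ModuleCat.{u} R) : ℕ∞ :=
  sInf ((fun i : ℕ => (i : ℕ∞)) ''
    {i | ¬ Subsingleton (ExtM R M (ModuleCat.of R R) i)})

/-- Reduced grade of `M` with respect to `C`. -/
def rgrade (C M : ModuleCat.{u} R) : ℕ∞ :=
  sInf ((fun i : ℕ => (i : ℕ∞)) ''
    {i | 0 < i ∧ ¬ Subsingleton (ExtM R M C i)})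

/-- `M` is reduced `G_C`-perfect. -/
def IsReducedGCPerfect (C M : ModuleCat.{u} R) : Prop :=
  gcdim R C M ≠ ⊤ ∧ rgrade R C M = gcdim R C M

/-- `M` is `G_C`-perfect. -/
def IsGCPerfect (C M : ModuleCat.{u} R) : Prop :=
  gcdim R C M ≠ ⊤ ∧ gradeR R M = gcdim R C M

/-- `π : P → M` is a projective cover: `P` projective, `π` surjective with superfluous kernel. -/
def IsProjectiveCover {P M : ModuleCat.{u} R} (π : ↥P →ₗ[R] ↥M) : Prop :=
  Module.Projective R ↥P ∧ Function.Surjective π ∧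
  ∀ N : Submodule R ↥P, N ⊔ LinearMap.ker π = ⊤ → N = ⊤

/-- `P₁ →d P₀ →π M → 0` is a minimal projective presentation of `M`. -/
def IsMinimalPresentation {P1 P0 M : ModuleCat.{u} R}
    (d : ↥P1 →ₗ[R] ↥P0) (π : ↥P0 →ₗ[R] ↥M) : Prop :=
  Module.Finite R ↥P1 ∧ Module.Finite R ↥P0 ∧
  IsProjectiveCover R π ∧
  LinearMap.range d = LinearMap.ker π ∧
  Module.Projective R ↥P1 ∧
  ∀ N : Submodule R ↥P1, N ⊔ LinearMap.ker d = ⊤ → N = ⊤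

/-- `T` is (a module isomorphic to) the transpose `Tr_C(M)` of `M` with respect to `C`,
computed from a minimal projective presentation of `M`. -/
def IsTransposeC (C M T : ModuleCat.{u} R) : Prop :=
  ∃ (P1 P0 : ModuleCat.{u} R) (d : ↥P1 →ₗ[R] ↥P0) (π : ↥P0 →ₗ[R] ↥M),
    IsMinimalPresentation R d π ∧
    Nonempty (↥T ≃ₗ[R]
      ((↥P1 →ₗ[R] ↥C) ⧸ LinearMap.range (LinearMap.lcomp R ↥C d)))

/-- `T` is the usual Auslander transpose `Tr(M) = Tr_R(M)`. -/
def IsTranspose (M T : ModuleCat.{u} R) : Prop :=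
  IsTransposeC R (ModuleCat.of R R) M T

/-- `S` is (a module isomorphic to) the first syzygy `Ω N`, i.e. the kernel of a
projective cover of `N`. -/
def IsSyzygyOf (N S : ModuleCat.{u} R) : Prop :=
  ∃ (P : ModuleCat.{u} R) (π : ↥P →ₗ[R] ↥N),
    Module.Finite R ↥P ∧ IsProjectiveCover R π ∧
    Nonempty (↥S ≃ₗ[R] LinearMap.ker π)

/-- `S` is (a module isomorphic to) the `n`-th syzygy `Ωⁿ M`. -/
def IsNthSyzygy : ℕ → ModuleCat.{u} R → ModuleCat.{u} R → Prop
  | 0, M, S => Nonempty (↥S ≃ₗ[R] ↥M)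
  | n+1, M, S => ∃ K : ModuleCat.{u} R, IsNthSyzygy n M K ∧ IsSyzygyOf R K S

/-- `L` is (a module isomorphic to) `λ M = Ω Tr M`. -/
def IsLambda (M L : ModuleCat.{u} R) : Prop :=
  ∃ T : ModuleCat.{u} R, IsTranspose R M T ∧ IsSyzygyOf R T L

/-- `M` is horizontally linked, i.e. `M ≅ λλM`. -/
def IsHorizontallyLinked (M : ModuleCat.{u} R) : Prop :=
  ∃ L L2 : ModuleCat.{u} R, IsLambda R M L ∧ IsLambda R L L2 ∧
    Nonempty (↥M ≃ₗ[R] ↥L2)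

/-- `M` is stable: it has no non-zero projective direct summand. -/
def IsStable (M : ModuleCat.{u} R) : Prop :=
  ∀ (P N : ModuleCat.{u} R), Module.Projective R ↥P →
    Nonempty (↥M ≃ₗ[R] (↥P × ↥N)) → Subsingleton ↥P

/-- `N` belongs to the Auslander class `A_C`. -/
def MemAuslanderClass (C N : ModuleCat.{u} R) : Prop :=
  Function.Bijective (TensorProduct.mk R ↥N ↥C) ∧
  (∀ i : ℕ, 0 < i → Subsingleton (TorM R C N i)) ∧
  (∀ i : ℕ, 0 < i → Subsingleton
    (ExtM R C (ModuleCat.of R (↥N ⊗[R] ↥C)) i))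

/-- `R` is semiperfect: every finite `R`-module has a projective cover. -/
def IsSemiperfectRing : Prop :=
  ∀ M : ModuleCat.{u} R, Module.Finite R ↥M →
    ∃ (P : ModuleCat.{u} R) (π : ↥P →ₗ[R] ↥M),
      Module.Finite R ↥P ∧ IsProjectiveCover R π

/-- Depth over a local ring, via Ext from the residue field. -/
def rdepth [IsLocalRing R] (M : ModuleCat.{u} R) : ℕ∞ :=
  sInf ((fun i : ℕ => (i : ℕ∞)) ''
    {i | ¬ Subsingleton
      (ExtM R (ModuleCat.of R (IsLocalRing.ResidueField R)) M i)})

/-- Projective dimension at most `n`. -/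
def pdimLE : ℕ → ModuleCat.{u} R → Prop
  | 0, M => Module.Projective R ↥M
  | n+1, M => ∃ (X K : ModuleCat.{u} R) (f : ↥K →ₗ[R] ↥X) (g : ↥X →ₗ[R] ↥M),
      Function.Injective f ∧ Function.Surjective g ∧
      LinearMap.ker g = LinearMap.range f ∧
      Module.Projective R ↥X ∧ pdimLE n K

/-- Projective dimension, as an element of `ℕ∞`. -/
def pdim (M : ModuleCat.{u} R) : ℕ∞ :=
  sInf ((fun n : ℕ => (n : ℕ∞)) '' {n | pdimLE R n M})

/-- `M` is `C`-`k`-torsionless. -/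
def IsCkTorsionless (C M : ModuleCat.{u} R) (k : ℕ) : Prop :=
  k = 0 ∨ ∀ T : ModuleCat.{u} R, IsTransposeC R C M T →
    ∀ i : ℕ, 1 ≤ i → i ≤ k → Subsingleton (ExtM R T C i)

/-- `M` is a `C`-syzygy: it embeds into `P ⊗_R C` with `P` finite projective. -/
def IsCSyzygy (C M : ModuleCat.{u} R) : Prop :=
  ∃ (P : ModuleCat.{u} R), Module.Finite R ↥P ∧ Module.Projective R ↥P ∧
    ∃ f : ↥M →ₗ[R] (↥P ⊗[R] ↥C), Function.Injective f


/-- There is an exact sequence `0 → N → X_k → ⋯ → X_1 → M → 0` of finite `R`-modules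
with `Ext_R^i(X_j, C) = 0` for all `i > 0` and all `j`. -/
def ExtVanishingChain (C : ModuleCat.{u} R) : ℕ → ModuleCat.{u} R → ModuleCat.{u} R → Prop
  | 0, N, M => Nonempty (↥N ≃ₗ[R] ↥M)
  | k+1, N, M => ∃ (X K : ModuleCat.{u} R) (f : ↥K →ₗ[R] ↥X) (g : ↥X →ₗ[R] ↥M),
      Function.Injective f ∧ Function.Surjective g ∧
      LinearMap.ker g = LinearMap.range f ∧
      Module.Finite R ↥X ∧ (∀ i : ℕ, 0 < i → Subsingleton (ExtM R X C i)) ∧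
      ExtVanishingChain C k N K


section Helpers
variable {R}

def VE (X Y : Type u) [AddCommGroup X] [Module R X] [AddCommGroup Y] [Module R Y] (i : ℕ) : Prop :=
  Subsingleton (Abelian.Ext.{u} (ModuleCat.of R X) (ModuleCat.of R Y) i)

theorem extM_zero_iff (M N : ModuleCat.{u} R) :
    Subsingleton (ExtM R M N 0) ↔ Subsingleton (↥M →ₗ[R] ↥N) := by
  let P := ProjectiveResolution.of M
  rw [← ModuleCat.isZero_iff_subsingleton]
  unfold ExtM
  rw [(P.isoExt (R := R) 0 N).isZero_iff, ← HomologicalComplex.exactAt_iff_isZero_homology,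
    HomologicalComplex.exactAt_iff' _ 0 0 1 (by simp) (by simp), ShortComplex.moduleCat_exact_iff]
  have hd0 : P.complex.d 0 0 = 0 := P.complex.shape _ _ (by simp)
  obtain ⟨ε, hε, hepi, hdesc⟩ : ∃ ε : P.complex.X 0 ⟶ M, P.complex.d 1 0 ≫ ε = 0 ∧ Epi ε ∧
      ∀ f : P.complex.X 0 ⟶ N, P.complex.d 1 0 ≫ f = 0 → ∃ g : M ⟶ N, ε ≫ g = f :=
    ⟨P.π.f 0, P.complex_d_comp_π_f_zero, (inferInstance : Epi (P.π.f 0)),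
      fun f hf => by
        have : Epi (P.π.f 0) := inferInstance
        exact ⟨P.exact₀.desc f hf, P.exact₀.g_desc f hf⟩⟩
  constructor
  · intro h
    refine ⟨fun a b => ?_⟩
    suffices H : ∀ a : M ⟶ N, a = 0 from
      congrArg ModuleCat.Hom.hom ((H (ModuleCat.ofHom a)).trans (H (ModuleCat.ofHom b)).symm)
    intro a
    have h1 : P.complex.d 1 0 ≫ ε ≫ a = 0 := by
      rw [← Category.assoc, hε, Limits.zero_comp]
    obtain ⟨g, hg⟩ : ∃ g : P.complex.X 0 ⟶ N, P.complex.d 0 0 ≫ g = ε ≫ a := h (ε ≫ a) h1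
    rw [hd0, Limits.zero_comp] at hg
    rw [← cancel_epi ε, ← hg, Limits.comp_zero]
  · intro h f hf
    obtain ⟨g, hg⟩ := hdesc f hf
    have h2 : g = 0 := ModuleCat.hom_ext (h.elim _ _)
    rw [h2, Limits.comp_zero] at hg
    have h3 : P.complex.d 0 0 ≫ (0 : P.complex.X 0 ⟶ N) = f := by
      rw [← hg, Limits.comp_zero]
    exact ⟨(0 : P.complex.X 0 ⟶ N), h3⟩

theorem extM_succ_iff (M N : ModuleCat.{u} R) (i : ℕ) :
    Subsingleton (ExtM R M N (i+1)) ↔ Subsingleton (Abelian.Ext.{u} M N (i+1)) := by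
  let P := ProjectiveResolution.of M
  rw [← ModuleCat.isZero_iff_subsingleton]
  unfold ExtM
  rw [(P.isoExt (R := R) (i+1) N).isZero_iff, ← HomologicalComplex.exactAt_iff_isZero_homology,
    HomologicalComplex.exactAt_iff' _ i (i+1) (i+2) (by simp) (by simp), ShortComplex.moduleCat_exact_iff]
  constructor
  · intro h
    refine ⟨fun a b => ?_⟩
    suffices H : ∀ a : Abelian.Ext.{u} M N (i+1), a = 0 by rw [H a, H b]
    intro a
    obtain ⟨f, hf, rfl⟩ := P.extMk_surjective a (i+2) rfl
    rw [P.extMk_eq_zero_iff f (i+2) rfl hf i rfl]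
    obtain ⟨g, hg⟩ := h f hf
    exact ⟨g, hg⟩
  · intro h f hf
    have := (P.extMk_eq_zero_iff f (i+2) rfl hf i rfl).1 (Subsingleton.elim _ _)
    exact this

section
variable {A B D X Y : Type u} [AddCommGroup A] [Module R A] [AddCommGroup B] [Module R B]
  [AddCommGroup D] [Module R D] [AddCommGroup X] [Module R X] [AddCommGroup Y] [Module R Y]

structure SES (f : A →ₗ[R] B) (g : B →ₗ[R] D) : Prop where
  inj : Function.Injective f
  surj : Function.Surjective g
  ex : LinearMap.ker g = LinearMap.range f

variable {f : A →ₗ[R] B} {g : B →ₗ[R] D}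

theorem SES.zero (h : SES f g) : g ∘ₗ f = 0 := by
  rw [← LinearMap.range_le_ker_iff, h.ex]

def SES.sc (h : SES f g) : ShortComplex (ModuleCat.{u} R) :=
  ShortComplex.mk (ModuleCat.ofHom f) (ModuleCat.ofHom g) (by rw [← ModuleCat.ofHom_comp, h.zero]; rfl)

theorem SES.se (h : SES f g) : h.sc.ShortExact where
  exact := by
    rw [ShortComplex.moduleCat_exact_iff]
    intro x hx
    have : x ∈ LinearMap.ker g := hx
    rw [h.ex] at this
    exact this
  mono_f := (ModuleCat.mono_iff_injective _).2 h.inj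
  epi_g := (ModuleCat.epi_iff_surjective _).2 h.surj

theorem SES.cov (h : SES f g) {i : ℕ} (hB : VE (R := R) X B i) (hA : VE (R := R) X A (i+1)) :
    VE (R := R) X D i := by
  unfold VE at *
  refine ⟨fun a b => ?_⟩
  suffices H : ∀ a : Abelian.Ext.{u} (ModuleCat.of R X) (ModuleCat.of R D) i, a = 0 by rw [H a, H b]
  intro a
  obtain ⟨x, hx⟩ := Abelian.Ext.covariant_sequence_exact₃ (ModuleCat.of R X) h.se a rfl (hA.elim _ _)
  have hx0 : x = 0 := hB.elim x 0
  rw [← hx, hx0]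
  simp
  rfl

theorem SES.con (h : SES f g) {i : ℕ} (hB : VE (R := R) B Y i) (hD : VE (R := R) D Y (i+1)) :
    VE (R := R) A Y i := by
  unfold VE at *
  refine ⟨fun a b => ?_⟩
  suffices H : ∀ a : Abelian.Ext.{u} (ModuleCat.of R A) (ModuleCat.of R Y) i, a = 0 by rw [H a, H b]
  intro a
  obtain ⟨x, hx⟩ := Abelian.Ext.contravariant_sequence_exact₁ h.se (ModuleCat.of R Y) a (add_comm 1 i) (hD.elim _ _)
  have hx0 : x = 0 := hB.elim x 0
  rw [← hx, hx0]
  simp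
  rfl

theorem SES.covMid (h : SES f g) {i : ℕ} (hA : VE (R := R) X A i) (hD : VE (R := R) X D i) :
    VE (R := R) X B i := by
  unfold VE at *
  refine ⟨fun a b => ?_⟩
  suffices H : ∀ a : Abelian.Ext.{u} (ModuleCat.of R X) (ModuleCat.of R B) i, a = 0 by rw [H a, H b]
  intro a
  obtain ⟨x, hx⟩ := Abelian.Ext.covariant_sequence_exact₂ (ModuleCat.of R X) h.se a (hD.elim _ _)
  have hx0 : x = 0 := hA.elim x 0
  rw [← hx, hx0]
  simp
  rfl

theorem SES.conMid (h : SES f g) {i : ℕ} (hA : VE (R := R) A Y i) (hD : VE (R := R) D Y i) :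
    VE (R := R) B Y i := by
  unfold VE at *
  refine ⟨fun a b => ?_⟩
  suffices H : ∀ a : Abelian.Ext.{u} (ModuleCat.of R B) (ModuleCat.of R Y) i, a = 0 by rw [H a, H b]
  intro a
  obtain ⟨x, hx⟩ := Abelian.Ext.contravariant_sequence_exact₂ h.se (ModuleCat.of R Y) a (hA.elim _ _)
  have hx0 : x = 0 := hD.elim x 0
  rw [← hx, hx0]
  simp
  rfl

theorem SES.extend (h : SES f g) (hD : VE (R := R) D Y 1) (φ : A →ₗ[R] Y) :
    ∃ ψ : B →ₗ[R] Y, ψ ∘ₗ f = φ := by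
  unfold VE at *
  obtain ⟨x, hx⟩ := Abelian.Ext.contravariant_sequence_exact₁ h.se (ModuleCat.of R Y)
    (Abelian.Ext.mk₀ (ModuleCat.ofHom φ)) rfl (hD.elim _ _)
  obtain ⟨y, rfl⟩ := Abelian.Ext.addEquiv₀.symm.surjective x
  refine ⟨ModuleCat.Hom.hom y, ?_⟩
  have : h.sc.f ≫ y = ModuleCat.ofHom φ := by
    apply Abelian.Ext.addEquiv₀.symm.injective
    simp at hx
    simp
    exact hx
  exact congrArg ModuleCat.Hom.hom this

theorem SES.lift (h : SES f g) (hA : VE (R := R) X A 1) (φ : X →ₗ[R] D) :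
    ∃ ψ : X →ₗ[R] B, g ∘ₗ ψ = φ := by
  unfold VE at *
  obtain ⟨x, hx⟩ := Abelian.Ext.covariant_sequence_exact₃ (ModuleCat.of R X) h.se
    (Abelian.Ext.mk₀ (ModuleCat.ofHom φ)) rfl (hA.elim _ _)
  obtain ⟨y, rfl⟩ := Abelian.Ext.addEquiv₀.symm.surjective x
  refine ⟨ModuleCat.Hom.hom y, ?_⟩
  have : y ≫ h.sc.g = ModuleCat.ofHom φ := by
    apply Abelian.Ext.addEquiv₀.symm.injective
    simp at hx
    simp
    exact hx
  exact congrArg ModuleCat.Hom.hom this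

theorem VE.of_sub_left [Subsingleton X] (i : ℕ) : VE (R := R) X Y i := by
  have hz := ModuleCat.isZero_of_subsingleton (ModuleCat.of R X)
  refine ⟨fun a b => ?_⟩
  rw [← Abelian.Ext.mk₀_id_comp a, ← Abelian.Ext.mk₀_id_comp b, hz.eq_of_src (𝟙 _) 0]; simp

theorem VE.of_sub_right [Subsingleton Y] (i : ℕ) : VE (R := R) X Y i := by
  have hz := ModuleCat.isZero_of_subsingleton (ModuleCat.of R Y)
  refine ⟨fun a b => ?_⟩
  rw [← Abelian.Ext.comp_mk₀_id a, ← Abelian.Ext.comp_mk₀_id b, hz.eq_of_src (𝟙 _) 0]; simp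

theorem SES.ofEquiv (e : A ≃ₗ[R] B) : SES e.toLinearMap (0 : B →ₗ[R] PUnit.{u+1}) where
  inj := e.injective
  surj := fun x => ⟨0, rfl⟩
  ex := by simp

theorem VE.congr_left (e : A ≃ₗ[R] B) {i : ℕ} (h : VE (R := R) A Y i) : VE (R := R) B Y i :=
  (SES.ofEquiv e).conMid h (VE.of_sub_left i)

theorem VE.congr_right (e : A ≃ₗ[R] B) {i : ℕ} (h : VE (R := R) X A i) : VE (R := R) X B i :=
  (SES.ofEquiv e).covMid h (VE.of_sub_right i)

theorem SES.prod : SES (LinearMap.inl R A B) (LinearMap.snd R A B) where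
  inj := LinearMap.inl_injective
  surj := LinearMap.snd_surjective
  ex := by ext ⟨a, b⟩; simp [eq_comm]

theorem VE.pi_left (k : ℕ) {i : ℕ} (h : VE (R := R) A Y i) : VE (R := R) (Fin k → A) Y i := by
  induction k with
  | zero => exact VE.of_sub_left i
  | succ k ih => exact VE.congr_left (Fin.consLinearEquiv R (fun _ => A)) (SES.prod.conMid h ih)

theorem VE.pi_right (k : ℕ) {i : ℕ} (h : VE (R := R) X A i) : VE (R := R) X (Fin k → A) i := by
  induction k with
  | zero => exact VE.of_sub_right i
  | succ k ih => exact VE.congr_right (Fin.consLinearEquiv R (fun _ => A)) (SES.prod.covMid h ih)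

theorem VE.projective [Module.Projective R X] (i : ℕ) : VE (R := R) X Y (i+1) := by
  have : Projective (ModuleCat.of R X) := (IsProjective.iff_projective _ ).1 inferInstance
  exact Abelian.Ext.subsingleton_of_projective _ _ _
end

section
variable {C : Type u} [AddCommGroup C] [Module R C]

/-- The homothety bijectivity of a semidualizing module. -/
def HomBij (R : Type u) [CommRing R] (C : Type u) [AddCommGroup C] [Module R C] : Prop :=
  Function.Bijective (fun r : R => (r • LinearMap.id : C →ₗ[R] C))

def homoEquiv (h : HomBij R C) : R ≃ₗ[R] (C →ₗ[R] C) :=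
  LinearEquiv.ofBijective
    { toFun := fun r => r • LinearMap.id
      map_add' := fun a b => add_smul a b _
      map_smul' := fun a b => by simp [mul_smul] } h

theorem homoEquiv_apply (h : HomBij R C) (r : R) (c : C) : homoEquiv h r c = r • c := rfl

variable {A K L M P S T : Type u} [AddCommGroup A] [Module R A]
  [AddCommGroup K] [Module R K] [AddCommGroup L] [Module R L]
  [AddCommGroup M] [Module R M] [AddCommGroup P] [Module R P] [AddCommGroup S] [Module R S]
  [AddCommGroup T] [Module R T]

theorem sub_of_homC [IsNoetherianRing R] [Module.Finite R C] (hC : HomBij R C) [Module.Finite R L]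
    (h : ∀ φ : C →ₗ[R] L, φ = 0) : Subsingleton L := by
  have : Subsingleton (C →ₗ[R] L) := ⟨fun a b => by rw [h a, h b]⟩
  obtain ⟨r, hr, hreg⟩ := IsSMulRegular.subsingleton_linearMap_iff.1 this
  have hr0 : r = 0 := by
    apply hC.1
    ext c
    simpa using Module.mem_annihilator.1 hr c
  subst hr0
  exact ⟨fun a b => hreg (by simp)⟩

/-- If `Hom(K,R) = 0` then `Hom(K,C) = 0`. -/
theorem homC_sub_of_homR [IsNoetherianRing R] [Module.Finite R C] (hC : HomBij R C)
    [Module.Finite R K] (h : ∀ φ : K →ₗ[R] R, φ = 0) : Subsingleton (K →ₗ[R] C) := by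
  apply sub_of_homC hC
  intro φ
  have h1 := h ((homoEquiv hC).symm.toLinearMap ∘ₗ φ.flip)
  ext c k
  have h2 := LinearMap.congr_fun h1 k
  simp only [LinearMap.comp_apply, LinearMap.zero_apply, LinearEquiv.coe_coe,
    LinearEquiv.map_eq_zero_iff] at h2
  exact LinearMap.congr_fun h2 c

def ev (C M : Type u) [AddCommGroup C] [Module R C] [AddCommGroup M] [Module R M] :
    M →ₗ[R] ((M →ₗ[R] C) →ₗ[R] C) :=
  (LinearMap.id : (M →ₗ[R] C) →ₗ[R] (M →ₗ[R] C)).flip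

theorem ev_apply (m : M) (f : M →ₗ[R] C) : ev C M m f = f m := rfl

theorem ev_bij_free (hC : HomBij R C) [Module.Finite R P] [Module.Free R P] :
    Function.Bijective (ev (R := R) C P) := by
  let b := Module.Free.chooseBasis R P
  constructor
  · rw [injective_iff_map_eq_zero]
    intro p hp
    apply b.ext_elem
    intro i
    rw [map_zero, Finsupp.zero_apply]
    apply hC.1
    ext c
    have := LinearMap.congr_fun hp ((b.coord i).smulRight c)
    simpa [ev_apply] using this
  · intro Φ
    let r : Module.Free.ChooseBasisIndex R P → R := fun i =>
      (homoEquiv hC).symm (Φ ∘ₗ (LinearMap.smulRightₗ (b.coord i)))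
    have hr : ∀ i c, Φ ((b.coord i).smulRight c) = r i • c := by
      intro i c
      rw [← homoEquiv_apply hC (r i) c]
      simp [r]
    refine ⟨∑ i, r i • b i, ?_⟩
    ext f
    rw [ev_apply]
    have hf : f = ∑ i, (b.coord i).smulRight (f (b i)) := by
      refine b.ext fun j => ?_
      simp [Finsupp.single_apply]
    conv_rhs => rw [hf]
    simp [hr]

theorem dualFree (k : ℕ) (e : P ≃ₗ[R] (Fin k → R)) : Nonempty ((P →ₗ[R] C) ≃ₗ[R] (Fin k → C)) :=
  ⟨((LinearEquiv.congrLeft C R e).trans ((Pi.basisFun R (Fin k)).constr R).symm)⟩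

theorem VE_dual_right [Module.Finite R P] [Module.Free R P] {i : ℕ}
    (h : VE (R := R) A C i) : VE (R := R) A (P →ₗ[R] C) i := by
  obtain ⟨k, ⟨e⟩⟩ : ∃ k, Nonempty (P ≃ₗ[R] (Fin k → R)) := by
    let b := Module.Free.chooseBasis R P
    exact ⟨_, ⟨(b.reindex (Fintype.equivFin _)).equivFun⟩⟩
  obtain ⟨e'⟩ := dualFree (C := C) k e
  exact VE.congr_right e'.symm (VE.pi_right k h)

theorem VE_dual_left [Module.Finite R P] [Module.Free R P] {i : ℕ}
    (h : VE (R := R) C A i) : VE (R := R) (P →ₗ[R] C) A i := by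
  obtain ⟨k, ⟨e⟩⟩ : ∃ k, Nonempty (P ≃ₗ[R] (Fin k → R)) := by
    let b := Module.Free.chooseBasis R P
    exact ⟨_, ⟨(b.reindex (Fintype.equivFin _)).equivFun⟩⟩
  obtain ⟨e'⟩ := dualFree (C := C) k e
  exact VE.congr_left e'.symm (VE.pi_left k h)

/-- Dualizing a short exact sequence, when restriction is surjective. -/
theorem SES.dual {f : L →ₗ[R] P} {g : P →ₗ[R] K} (h : SES f g)
    (hs : Function.Surjective (LinearMap.lcomp R C f)) :
    SES (LinearMap.lcomp R C g) (LinearMap.lcomp R C f) where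
  inj := fun a b hab => by
    ext k
    obtain ⟨p, rfl⟩ := h.surj k
    exact LinearMap.congr_fun hab p
  surj := hs
  ex := by
    ext φ
    constructor
    · intro hφ
      have hφ' : LinearMap.ker g ≤ LinearMap.ker φ := by
        rw [h.ex]
        rintro _ ⟨x, rfl⟩
        exact LinearMap.congr_fun hφ x
      refine ⟨(LinearMap.ker g).liftQ φ hφ' ∘ₗ
        (LinearMap.quotKerEquivOfSurjective g h.surj).symm.toLinearMap, ?_⟩
      ext p
      have : (LinearMap.quotKerEquivOfSurjective g h.surj).symm (g p) =
          Submodule.Quotient.mk p := by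
        rw [LinearEquiv.symm_apply_eq]; rfl
      simp [this]
    · rintro ⟨ψ, rfl⟩
      ext x
      have : g (f x) = 0 := LinearMap.congr_fun h.zero x
      simp [this]

theorem SES.dualRange {f : L →ₗ[R] P} {g : P →ₗ[R] K} (h : SES f g) :
    SES (LinearMap.lcomp R C g) (LinearMap.lcomp R C f).rangeRestrict where
  inj := fun a b hab => by
    ext k
    obtain ⟨p, rfl⟩ := h.surj k
    exact LinearMap.congr_fun hab p
  surj := LinearMap.surjective_rangeRestrict _
  ex := by
    rw [LinearMap.ker_rangeRestrict]
    ext φ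
    constructor
    · intro hφ
      have hφ' : LinearMap.ker g ≤ LinearMap.ker φ := by
        rw [h.ex]
        rintro _ ⟨x, rfl⟩
        exact LinearMap.congr_fun hφ x
      refine ⟨(LinearMap.ker g).liftQ φ hφ' ∘ₗ
        (LinearMap.quotKerEquivOfSurjective g h.surj).symm.toLinearMap, ?_⟩
      ext p
      have : (LinearMap.quotKerEquivOfSurjective g h.surj).symm (g p) =
          Submodule.Quotient.mk p := by
        rw [LinearEquiv.symm_apply_eq]; rfl
      simp [this]
    · rintro ⟨ψ, rfl⟩
      ext x
      have : g (f x) = 0 := LinearMap.congr_fun h.zero x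
      simp [this]

theorem SES.quot (N : Submodule R A) : SES N.subtype N.mkQ where
  inj := N.injective_subtype
  surj := N.mkQ_surjective
  ex := by simp

/-- Step A. -/
theorem stepA [IsNoetherianRing R] [Module.Finite R C] (hC : HomBij R C)
    (hCC : ∀ i, 0 < i → VE (R := R) C C i)
    {f : L →ₗ[R] P} {g : P →ₗ[R] K} (h : SES f g) [Module.Finite R P] [Module.Free R P]
    (hext : ∀ φ : L →ₗ[R] R, ∃ ψ : P →ₗ[R] R, ψ ∘ₗ f = φ)
    (hK : ∀ i, 0 < i → VE (R := R) C (K →ₗ[R] C) i) :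
    Function.Surjective (LinearMap.lcomp R C f) ∧ ∀ i, 0 < i → VE (R := R) C (L →ₗ[R] C) i := by
  have : Module.Finite R L := Module.Finite.of_injective f h.inj
  have key : Function.Surjective (LinearMap.lcomp R C f) := by
    have hB : VE (R := R) C (LinearMap.range (LinearMap.lcomp R C f)) 1 :=
      (SES.dualRange h).cov (VE_dual_right (hCC 1 one_pos)) (hK 2 two_pos)
    have hQ : Subsingleton ((L →ₗ[R] C) ⧸ LinearMap.range (LinearMap.lcomp R C f)) := by
      apply sub_of_homC hC
      intro χ
      obtain ⟨χ', hχ⟩ := (SES.quot (LinearMap.range (LinearMap.lcomp R C f))).lift hB χ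
      rw [← hχ]
      ext c
      rw [LinearMap.comp_apply, LinearMap.zero_apply, Submodule.mkQ_apply,
        Submodule.Quotient.mk_eq_zero]
      obtain ⟨ψ, hψ⟩ := hext ((homoEquiv hC).symm.toLinearMap ∘ₗ χ'.flip)
      refine ⟨((homoEquiv hC).toLinearMap ∘ₗ ψ).flip c, ?_⟩
      ext l
      have h1 := LinearMap.congr_fun hψ l
      simp only [LinearMap.comp_apply, LinearEquiv.coe_coe] at h1
      simp [h1]
    rw [Submodule.Quotient.subsingleton_iff] at hQ
    exact LinearMap.range_eq_top.1 hQ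
  refine ⟨key, fun i hi => ?_⟩
  exact (h.dual key).cov (VE_dual_right (hCC i hi)) (hK (i+1) (Nat.succ_pos i))

/-- The predicate Q used in the descent along syzygies. -/
def Qp (R : Type u) [CommRing R] (C K : Type u) [AddCommGroup C] [Module R C] [AddCommGroup K]
    [Module R K] : Prop :=
  (∀ i, 0 < i → VE (R := R) (K →ₗ[R] C) C i) ∧ Function.Bijective (ev (R := R) C K)

theorem stepB (hC : HomBij R C) (hCC : ∀ i, 0 < i → VE (R := R) C C i)
    {f : L →ₗ[R] P} {g : P →ₗ[R] K} (h : SES f g) [Module.Finite R P] [Module.Free R P]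
    (hs : Function.Surjective (LinearMap.lcomp R C f)) (hL : Qp R C L) : Qp R C K := by
  have hd := h.dual hs
  refine ⟨fun i hi => hd.con (VE_dual_left (hCC i hi)) (hL.1 (i+1) (Nat.succ_pos i)), ?_, ?_⟩
  · rw [injective_iff_map_eq_zero]
    intro k hk
    obtain ⟨p, rfl⟩ := h.surj k
    obtain ⟨Θ, hΘ⟩ : ∃ Θ : (L →ₗ[R] C) →ₗ[R] C, Θ ∘ₗ LinearMap.lcomp R C f = ev C P p := by
      have : ev C P p ∈ LinearMap.range (LinearMap.lcomp R C (LinearMap.lcomp R C f)) := by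
        have hle : LinearMap.ker (LinearMap.lcomp R C f) ≤ LinearMap.ker (ev C P p) := by
          rw [hd.ex]
          rintro _ ⟨ψ, rfl⟩
          exact LinearMap.congr_fun hk ψ
        refine ⟨(LinearMap.ker (LinearMap.lcomp R C f)).liftQ (ev C P p) hle ∘ₗ
          (LinearMap.quotKerEquivOfSurjective _ hs).symm.toLinearMap, ?_⟩
        ext φ
        have : (LinearMap.quotKerEquivOfSurjective _ hs).symm (LinearMap.lcomp R C f φ) =
            Submodule.Quotient.mk φ := by
          rw [LinearEquiv.symm_apply_eq]; rfl
        change (LinearMap.ker (LinearMap.lcomp R C f)).liftQ (ev C P p) hle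
          ((LinearMap.quotKerEquivOfSurjective _ hs).symm (LinearMap.lcomp R C f φ)) = _
        rw [this]; rfl
      exact this
    obtain ⟨l, rfl⟩ := hL.2.2 Θ
    have : f l = p := by
      apply (ev_bij_free hC).1
      rw [← hΘ]; rfl
    rw [← this]
    exact LinearMap.congr_fun h.zero l
  · intro Φ
    obtain ⟨Ψ, hΨ⟩ := hd.extend (hL.1 1 one_pos) Φ
    obtain ⟨p, rfl⟩ := (ev_bij_free hC).2 Ψ
    exact ⟨g p, by rw [← hΨ]; rfl⟩

theorem stepC {P1 : Type u} [AddCommGroup P1] [Module R P1]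
    (hC : HomBij R C) (hCC : ∀ i, 0 < i → VE (R := R) C C i)
    [Module.Finite R P] [Module.Free R P] [Module.Finite R P1] [Module.Free R P1]
    (d : P1 →ₗ[R] P) (hs : Function.Surjective (LinearMap.lcomp R C (LinearMap.range d).subtype))
    (hT : ∀ i, 0 < i →
      VE (R := R) ((P1 →ₗ[R] C) ⧸ LinearMap.range (LinearMap.lcomp R C d)) C i) :
    Qp R C (LinearMap.range d) := by
  have hr : LinearMap.range (LinearMap.lcomp R C d) =
      LinearMap.range (LinearMap.lcomp R C d.rangeRestrict) := by
    ext φ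
    constructor
    · rintro ⟨ψ, rfl⟩
      exact ⟨LinearMap.lcomp R C (LinearMap.range d).subtype ψ, rfl⟩
    · rintro ⟨ψ, rfl⟩
      obtain ⟨ψ', rfl⟩ := hs ψ
      exact ⟨ψ', rfl⟩
  have hses : SES (LinearMap.lcomp R C d.rangeRestrict)
      (LinearMap.range (LinearMap.lcomp R C d)).mkQ :=
    { inj := fun a b hab => by
        ext k
        obtain ⟨p, rfl⟩ := d.surjective_rangeRestrict k
        exact LinearMap.congr_fun hab p
      surj := Submodule.mkQ_surjective _
      ex := by rw [Submodule.ker_mkQ, hr] }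
  refine ⟨fun i hi => hses.con (VE_dual_left (hCC i hi)) (hT (i+1) (Nat.succ_pos i)), ?_, ?_⟩
  · rw [injective_iff_map_eq_zero]
    intro k hk
    apply Subtype.ext
    apply (ev_bij_free hC).1
    ext φ
    rw [Submodule.coe_zero, map_zero]
    exact LinearMap.congr_fun hk (LinearMap.lcomp R C (LinearMap.range d).subtype φ)
  · intro Φ
    obtain ⟨Ψ, hΨ⟩ := hses.extend (hT 1 one_pos) Φ
    obtain ⟨p, rfl⟩ := (ev_bij_free hC).2 Ψ
    exact ⟨d.rangeRestrict p, by rw [← hΨ]; rfl⟩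

theorem stepSplit {f : L →ₗ[R] P} {g : P →ₗ[R] K} (h : SES f g) [Module.Projective R P]
    [Module.Finite R L] [Module.Free R L]
    (hext : ∀ φ : L →ₗ[R] R, ∃ ψ : P →ₗ[R] R, ψ ∘ₗ f = φ) : Module.Projective R K := by
  let b := Module.Free.chooseBasis R L
  choose ψ hψ using fun i => hext (b.coord i)
  let r : P →ₗ[R] L := ∑ i, (ψ i).smulRight (b i)
  have hr : ∀ l, r (f l) = l := by
    intro l
    have : ∀ i, ψ i (f l) = b.repr l i := fun i => LinearMap.congr_fun (hψ i) l
    simp [r, this, b.sum_repr]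
  have hle : LinearMap.ker g ≤ LinearMap.ker (LinearMap.id - f ∘ₗ r) := by
    rw [h.ex]
    rintro _ ⟨l, rfl⟩
    simp [hr]
  refine Module.Projective.of_split ((LinearMap.ker g).liftQ _ hle ∘ₗ
        (LinearMap.quotKerEquivOfSurjective g h.surj).symm.toLinearMap) g ?_
  ext k
  obtain ⟨p, rfl⟩ := h.surj k
  have h1 : (LinearMap.quotKerEquivOfSurjective g h.surj).symm (g p) =
      Submodule.Quotient.mk p := by
    rw [LinearEquiv.symm_apply_eq]; rfl
  have h2 : g (f (r p)) = 0 := LinearMap.congr_fun h.zero (r p)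
  simp [h1, h2]

end

theorem inductD [IsLocalRing R] [IsNoetherianRing R] (C : ModuleCat.{u} R) [Module.Finite R ↥C]
    (hC : HomBij R ↥C) (hCC : ∀ i, 0 < i → VE (R := R) ↥C ↥C i) (n : ℕ)
    (M : ModuleCat.{u} R) (hMfin : Module.Finite R ↥M) (hM0 : Nontrivial ↥M)
    (h0 : ∀ φ : ↥M →ₗ[R] R, φ = 0)
    (hM : ∀ i, 0 < i → i ≤ n → VE (R := R) ↥M R i) :
    ∀ (m : ℕ) (S : ModuleCat.{u} R), m < n → IsNthSyzygy R m M S →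
      Module.Finite R ↥S ∧ (∀ i, 0 < i → i + m ≤ n → VE (R := R) ↥S R i) ∧
      (∀ i, 0 < i → VE (R := R) ↥C (↥S →ₗ[R] ↥C) i) ∧ ¬ Qp R ↥C ↥S ∧
      ¬ Module.Projective R ↥S := by
  intro m
  induction m with
  | zero =>
    rintro S - ⟨e⟩
    have hSf : Module.Finite R ↥S := Module.Finite.equiv e.symm
    have hS0 : ∀ φ : ↥S →ₗ[R] R, φ = 0 := by
      intro φ
      have := h0 (φ ∘ₗ e.symm.toLinearMap)
      ext s
      simpa using LinearMap.congr_fun this (e s)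
    have hSn : Nontrivial ↥S := e.toEquiv.nontrivial
    have hSC : Subsingleton (↥S →ₗ[R] ↥C) := homC_sub_of_homR hC hS0
    refine ⟨hSf, fun i hi hin => VE.congr_left e.symm (hM i hi hin),
      fun i hi => VE.of_sub_right i, ?_, ?_⟩
    · intro hQ
      obtain ⟨s, hs⟩ := exists_ne (0 : ↥S)
      apply hs
      apply hQ.2.1
      ext φ
      rw [Subsingleton.elim φ 0]; simp
    · intro hP
      obtain ⟨s, hs⟩ := exists_ne (0 : ↥S)
      apply hs
      rw [← Module.forall_dual_apply_eq_zero_iff R s]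
      intro φ
      rw [hS0 φ]; rfl
  | succ m ih =>
    rintro S hm ⟨K, hK, P, π, hPf, ⟨hPp, hπ, -⟩, ⟨e⟩⟩
    obtain ⟨hKf, hKR, hKC, hKQ, hKP⟩ := ih K (by omega) hK
    have hPfree : Module.Free R ↥P := Module.free_of_flat_of_isLocalRing
    have hses : SES ((LinearMap.ker π).subtype ∘ₗ e.toLinearMap) π :=
      { inj := (Submodule.injective_subtype _).comp e.injective
        surj := hπ
        ex := by simp [LinearMap.range_comp] }
    have hSf : Module.Finite R ↥S := Module.Finite.of_injective _ hses.inj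
    have hext := hses.extend (hKR 1 one_pos (by omega))
    obtain ⟨hs, hSC⟩ := stepA hC hCC hses hext hKC
    refine ⟨hSf, fun i hi hin => ?_, hSC, fun hQ => hKQ (stepB hC hCC hses hs hQ), fun hP => hKP ?_⟩
    · obtain ⟨j, rfl⟩ := Nat.exists_eq_add_one.2 hi
      exact hses.con (VE.projective j) (hKR _ (Nat.succ_pos _) (by omega))
    · have : Module.Free R ↥S := Module.free_of_flat_of_isLocalRing
      exact stepSplit hses hext

end Helpers

/-- over a Noetherian local ring, if `grade_R(M) > n > 0` and `M ≠ 0`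
is finite, then `T_n^C(M) = Tr_C(Ω^{n-1} M)` is not `G_C`-perfect and has grade `0`. -/
theorem statement12 [IsLocalRing R] [IsNoetherianRing R]
    (C : ModuleCat.{u} R) (hC : IsSemidualizing R C)
    (n : ℕ) (hn : 0 < n)
    (M : ModuleCat.{u} R) (hMfin : Module.Finite R ↥M) (hM0 : Nontrivial ↥M)
    (hgrade : (n : ℕ∞) < gradeR R M) :
    ∀ S T : ModuleCat.{u} R, IsNthSyzygy R (n - 1) M S →
      IsTransposeC R C S T →
        ¬ IsGCPerfect R C T ∧ gradeR R T = 0 := by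
  intro S T hS hT
  obtain ⟨hCf, hCb, hCe⟩ := hC
  have hCb' : HomBij R ↥C := hCb
  have hCC : ∀ i, 0 < i → VE (R := R) ↥C ↥C i := by
    intro i hi
    obtain ⟨j, rfl⟩ := Nat.exists_eq_add_one.2 hi
    exact (extM_succ_iff C C j).1 (hCe _ hi)
  have hMe : ∀ i, i ≤ n → Subsingleton (ExtM R M (ModuleCat.of R R) i) := by
    intro i hi
    by_contra hcon
    have : gradeR R M ≤ (i : ℕ∞) := sInf_le ⟨i, hcon, rfl⟩
    exact absurd (lt_of_lt_of_le hgrade this) (not_lt.2 (by exact_mod_cast hi))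
  have h0 : ∀ φ : ↥M →ₗ[R] R, φ = 0 := by
    have := (extM_zero_iff M (ModuleCat.of R R)).1 (hMe 0 (Nat.zero_le _))
    exact fun φ => this.elim φ 0
  have hMR : ∀ i, 0 < i → i ≤ n → VE (R := R) ↥M R i := by
    intro i hi hin
    obtain ⟨j, rfl⟩ := Nat.exists_eq_add_one.2 hi
    exact (extM_succ_iff M (ModuleCat.of R R) j).1 (hMe _ hin)
  obtain ⟨hSf, hSR, hSC, hSQ, hSP⟩ :=
    inductD C hCb' hCC n M hMfin hM0 h0 hMR (n - 1) S (by omega) hS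
  obtain ⟨P1, P0, d, π, ⟨hP1f, hP0f, ⟨hP0p, hπ, -⟩, hdπ, hP1p, -⟩, ⟨e⟩⟩ := hT
  have hP1free : Module.Free R ↥P1 := Module.free_of_flat_of_isLocalRing
  have hP0free : Module.Free R ↥P0 := Module.free_of_flat_of_isLocalRing
  have hses : SES (LinearMap.range d).subtype π :=
    { inj := Submodule.injective_subtype _
      surj := hπ
      ex := by rw [Submodule.range_subtype, hdπ] }
  have hext := hses.extend (hSR 1 one_pos (by omega))
  obtain ⟨hs, -⟩ := stepA hCb' hCC hses hext hSC
  have hTf : Module.Finite R ↥T := Module.Finite.equiv e.symm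
  have hgr : gradeR R T = 0 := by
    have hmem : ¬ Subsingleton (ExtM R T (ModuleCat.of R R) 0) := by
      intro hsub
      have hTR := (extM_zero_iff T (ModuleCat.of R R)).1 hsub
      have hTC : Subsingleton (↥T →ₗ[R] ↥C) := homC_sub_of_homR hCb' fun φ => hTR.elim φ 0
      have hinj : Function.Injective d := by
        rw [injective_iff_map_eq_zero]
        intro p hp
        apply (ev_bij_free (C := ↥C) hCb').1
        rw [map_zero]
        have hle : LinearMap.range (LinearMap.lcomp R ↥C d) ≤ LinearMap.ker (ev ↥C ↥P1 p) := by
          rintro _ ⟨ψ, rfl⟩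
          change ψ (d p) = 0
          rw [hp, map_zero]
        have hz := hTC.elim ((LinearMap.range (LinearMap.lcomp R ↥C d)).liftQ _ hle ∘ₗ
          e.toLinearMap) 0
        ext φ
        have := LinearMap.congr_fun hz (e.symm (Submodule.Quotient.mk φ))
        simpa using this
      have e' : ↥P1 ≃ₗ[R] LinearMap.range d := LinearEquiv.ofInjective d hinj
      have : Module.Finite R (LinearMap.range d) := Module.Finite.equiv e'
      have : Module.Free R (LinearMap.range d) := Module.Free.of_equiv e'
      exact hSP (stepSplit hses hext)
    have : gradeR R T ≤ ((0 : ℕ) : ℕ∞) := sInf_le ⟨0, hmem, rfl⟩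
    simpa using this
  refine ⟨?_, hgr⟩
  rintro ⟨-, hg⟩
  rw [hgr] at hg
  have hle : IsTotallyCReflexive R C T := by
    have hne : ((fun n : ℕ => (n : ℕ∞)) '' {n | gcdimLE R C n T}).Nonempty := by
      by_contra hcon
      rw [Set.not_nonempty_iff_eq_empty] at hcon
      unfold gcdim at hg
      rw [hcon, sInf_empty] at hg
      exact absurd hg (by simp)
    obtain ⟨k, hk, hk0⟩ := csInf_mem hne
    change (k : ℕ∞) = gcdim R C T at hk0
    rw [← hg] at hk0
    have : k = 0 := by exact_mod_cast hk0
    subst this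
    exact hk
  apply hSQ
  apply stepB hCb' hCC hses hs
  apply stepC hCb' hCC d hs
  intro i hi
  obtain ⟨j, rfl⟩ := Nat.exists_eq_add_one.2 hi
  exact VE.congr_left e ((extM_succ_iff T C j).1 (hle.2.2.1 _ hi))

end
end

section
/- Let R be a Noetherian local ring and M a G_C-perfect R-module of grade n > 0. Then Tr_C(M) is a reduced G_C-perfect R-module of G_C-dimension 1, and the R-module Ext_R^1(Tr_C(M), C) is G_C-perfect of G_C-dimension n. -/
open CategoryTheory TensorProduct

noncomputable section

universe u

variable (R : Type u) [CommRing R]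

lemma leftDerived_additive_aux {A B : Type*} [Category A] [Category B] [Abelian A] [Abelian B]
    [HasProjectiveResolutions A] (F : A ⥤ B) [F.Additive] (n : ℕ) : (F.leftDerived n).Additive where
  map_add {X Y f g} := by
    let P := projectiveResolution X
    let Q := projectiveResolution Y
    rw [F.leftDerived_map_eq n f (ProjectiveResolution.lift f P Q)
        (ProjectiveResolution.lift_commutes f P Q),
      F.leftDerived_map_eq n g (ProjectiveResolution.lift g P Q)
        (ProjectiveResolution.lift_commutes g P Q),
      F.leftDerived_map_eq n (f + g) (ProjectiveResolution.lift f P Q +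
        ProjectiveResolution.lift g P Q) (by
          rw [Preadditive.add_comp, ProjectiveResolution.lift_commutes,
            ProjectiveResolution.lift_commutes, Functor.map_add, Preadditive.comp_add])]
    rw [Functor.map_add, Preadditive.add_comp, Preadditive.comp_add]

lemma ExtM_subsingleton_of_sum (i : ℕ) (N X Y : ModuleCat.{u} R) {ι : Type*} (s : Finset ι)
    (a : ι → (X ⟶ Y)) (b : ι → (Y ⟶ X)) (h : ∑ j ∈ s, a j ≫ b j = 𝟙 X)
    (hY : Subsingleton (ExtM R Y N i)) : Subsingleton (ExtM R X N i) := by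
  let G : ModuleCat.{u} R ⥤ (ModuleCat.{u} R)ᵒᵖ :=
    ((linearYoneda R (ModuleCat.{u} R)).obj N).rightOp.leftDerived i
  have : G.Additive := leftDerived_additive_aux _ i
  have hG : Limits.IsZero (G.obj Y) := by
    have : Limits.IsZero (ExtM R Y N i) := ModuleCat.isZero_of_subsingleton _
    exact this.op
  have hX : Limits.IsZero (G.obj X) := by
    rw [Limits.IsZero.iff_id_eq_zero, ← G.map_id, ← h, Functor.map_sum]
    refine Finset.sum_eq_zero fun j _ => ?_
    rw [G.map_comp, hG.eq_of_tgt (G.map (a j)) 0, Limits.zero_comp]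
  exact ModuleCat.subsingleton_of_isZero hX.unop

lemma ExtM_subsingleton_of_equiv (i : ℕ) (N X Y : ModuleCat.{u} R) (e : ↥X ≃ₗ[R] ↥Y)
    (hY : Subsingleton (ExtM R Y N i)) : Subsingleton (ExtM R X N i) := by
  refine ExtM_subsingleton_of_sum R i N X Y (Finset.univ : Finset Unit)
    (fun _ => ModuleCat.ofHom e.toLinearMap) (fun _ => ModuleCat.ofHom e.symm.toLinearMap) ?_ hY
  ext x
  simp

lemma ExtM_subsingleton_of_subsingleton (i : ℕ) (N X : ModuleCat.{u} R) (h : Subsingleton ↥X) :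
    Subsingleton (ExtM R X N i) := by
  let G : ModuleCat.{u} R ⥤ (ModuleCat.{u} R)ᵒᵖ :=
    ((linearYoneda R (ModuleCat.{u} R)).obj N).rightOp.leftDerived i
  have : G.Additive := leftDerived_additive_aux _ i
  have hX : Limits.IsZero (G.obj X) := G.map_isZero (ModuleCat.isZero_of_subsingleton X)
  exact ModuleCat.subsingleton_of_isZero hX.unop

lemma ExtM_subsingleton_of_projective (i : ℕ) (hi : 0 < i) (N X : ModuleCat.{u} R)
    (h : Module.Projective R ↥X) : Subsingleton (ExtM R X N i) := by
  obtain ⟨k, rfl⟩ : ∃ k, i = k + 1 := ⟨i - 1, by omega⟩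
  have : Projective X := (IsProjective.iff_projective (P := ↥X)).1 h
  exact ModuleCat.subsingleton_of_isZero (isZero_Ext_succ_of_projective X N k)

lemma resolution_ext0 (X N : ModuleCat.{u} R) (h : Subsingleton (ExtM R X N 0)) :
    Subsingleton (↥X →ₗ[R] ↥N) := by
  let P : ProjectiveResolution X := (HasProjectiveResolution.out (Z := X)).some
  have e := P.isoExt (R := R) 0 N
  have hz : Limits.IsZero ((P.complex.linearYonedaObj R N).homology 0) :=
    Limits.IsZero.of_iso (ModuleCat.isZero_of_subsingleton (ExtM R X N 0)) e.symm
  rw [← HomologicalComplex.exactAt_iff_isZero_homology,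
    HomologicalComplex.exactAt_iff' _ 0 0 1 (by simp) (by simp)] at hz
  rw [ShortComplex.moduleCat_exact_iff] at hz
  refine subsingleton_of_forall_eq 0 fun f => ?_
  let π0 : P.complex.X 0 ⟶ X := P.π.f 0
  let f' : X ⟶ N := ModuleCat.ofHom f
  have hπ : P.complex.d 1 0 ≫ π0 = 0 := P.complex_d_comp_π_f_zero
  have hd : P.complex.d 1 0 ≫ (π0 ≫ f') = 0 := by
    rw [← Category.assoc, hπ, Limits.zero_comp]
  obtain ⟨g, hg⟩ := hz (π0 ≫ f') hd
  have h0 : (P.complex.linearYonedaObj R N).d 0 0 = 0 :=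
    HomologicalComplex.shape _ _ _ (by simp)
  have h1 : π0 ≫ f' = 0 := by
    refine hg.symm.trans ?_
    change ((P.complex.linearYonedaObj R N).d 0 0).hom g = 0
    rw [h0]; rfl
  have h2 : f' = 0 := by
    have : Epi π0 := (inferInstance : Epi (P.π.f 0))
    exact (cancel_epi π0).1 (by rw [h1, Limits.comp_zero])
  exact congrArg ModuleCat.Hom.hom h2

lemma resolution_ext1 (X N : ModuleCat.{u} R) :
    ∃ (P0 P1 P2 : ModuleCat.{u} R) (d2 : ↥P2 →ₗ[R] ↥P1) (d1 : ↥P1 →ₗ[R] ↥P0) (p : ↥P0 →ₗ[R] ↥X)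
      (Θ : LinearMap.ker (LinearMap.lcomp R ↥N d2) →ₗ[R] ↥(ExtM R X N 1)),
      Module.Projective R ↥P0 ∧ Module.Projective R ↥P1 ∧ Function.Surjective p ∧
      LinearMap.ker p = LinearMap.range d1 ∧ LinearMap.ker d1 = LinearMap.range d2 ∧
      Function.Surjective Θ ∧ ∀ f, Θ f = 0 ↔ ∃ g : ↥P0 →ₗ[R] ↥N, f.1 = g ∘ₗ d1 := by
  let P : ProjectiveResolution X := (HasProjectiveResolution.out (Z := X)).some
  let K := P.complex.linearYonedaObj R N
  let S := K.sc' 0 1 2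
  let e : ExtM R X N 1 ≅ S.moduleCatLeftHomologyData.H :=
    P.isoExt (R := R) 1 N ≪≫ ShortComplex.homologyMapIso (K.isoSc' 0 1 2 (by simp) (by simp)) ≪≫
      S.moduleCatHomologyIso
  let d2 := (P.complex.d 2 1).hom
  let φ : LinearMap.ker (LinearMap.lcomp R ↥N d2) →ₗ[R] LinearMap.ker S.g.hom :=
    { toFun := fun f => ⟨ModuleCat.ofHom f.1, by
        have := LinearMap.mem_ker.1 f.2
        exact LinearMap.mem_ker.2 (congrArg ModuleCat.ofHom this)⟩
      map_add' := fun f g => rfl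
      map_smul' := fun f g => rfl }
  have hφ : Function.Surjective φ := by
    rintro ⟨f, hf⟩
    refine ⟨⟨ModuleCat.Hom.hom (show P.complex.X 1 ⟶ N from f), ?_⟩, ?_⟩
    · rw [LinearMap.mem_ker] at hf ⊢
      exact congrArg ModuleCat.Hom.hom (show P.complex.d 2 1 ≫ (show P.complex.X 1 ⟶ N from f) = 0 from hf)
    · rfl
  let Θ := e.toLinearEquiv.symm.toLinearMap ∘ₗ
    (Submodule.mkQ (LinearMap.range S.moduleCatToCycles)) ∘ₗ φ
  refine ⟨P.complex.X 0, P.complex.X 1, P.complex.X 2, d2, (P.complex.d 1 0).hom,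
    (P.π.f 0).hom, Θ, ?_, ?_, ?_, ?_, ?_, ?_, ?_⟩
  · exact (IsProjective.iff_projective (P := ↥(P.complex.X 0))).2 (P.projective 0)
  · exact (IsProjective.iff_projective (P := ↥(P.complex.X 1))).2 (P.projective 1)
  · exact (ModuleCat.epi_iff_surjective _).1 (inferInstance : Epi (P.π.f 0))
  · exact (P.exact₀.moduleCat_range_eq_ker).symm
  · exact ((P.exact_succ 0).moduleCat_range_eq_ker).symm
  · exact e.toLinearEquiv.symm.surjective.comp ((Submodule.mkQ_surjective _).comp hφ)
  · intro f
    have : Θ f = 0 ↔ φ f ∈ LinearMap.range S.moduleCatToCycles := by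
      exact (LinearEquiv.map_eq_zero_iff e.toLinearEquiv.symm).trans (Submodule.Quotient.mk_eq_zero _)
    rw [this]
    constructor
    · rintro ⟨g, hg⟩
      refine ⟨ModuleCat.Hom.hom (show P.complex.X 0 ⟶ N from g), ?_⟩
      exact congrArg (fun t => ModuleCat.Hom.hom (show P.complex.X 1 ⟶ N from t.1)) hg.symm
    · rintro ⟨g, hg⟩
      refine ⟨ModuleCat.ofHom g, ?_⟩
      apply Subtype.ext
      exact congrArg ModuleCat.ofHom hg.symm

section LinAlg
variable {R}
variable {P0 P1 P2 T X K N : Type*} [AddCommGroup P0] [AddCommGroup P1] [AddCommGroup P2]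
  [AddCommGroup T] [AddCommGroup X] [AddCommGroup K] [AddCommGroup N] [Module R P0] [Module R P1]
  [Module R P2] [Module R T] [Module R X] [Module R K] [Module R N]

lemma extend_aux (d1 : P1 →ₗ[R] P0) (p : P0 →ₗ[R] T) (hp : Function.Surjective p)
    (hex : LinearMap.ker p = LinearMap.range d1)
    (i : K →ₗ[R] X) (q : X →ₗ[R] T) (hi : Function.Injective i)
    (hiq : LinearMap.ker q = LinearMap.range i) (a : P0 →ₗ[R] X) (b : P1 →ₗ[R] K)
    (ha : q ∘ₗ a = p) (hb : i ∘ₗ b = a ∘ₗ d1) (h : K →ₗ[R] N) (g : P0 →ₗ[R] N)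
    (hg : h ∘ₗ b = g ∘ₗ d1) : ∃ h' : X →ₗ[R] N, h' ∘ₗ i = h := by
  let s : P0 × K →ₗ[R] X := a.coprod i
  have hqi : ∀ k, q (i k) = 0 := fun k => by
    have : i k ∈ LinearMap.ker q := hiq ▸ ⟨k, rfl⟩
    exact this
  have hs : Function.Surjective s := by
    intro x
    obtain ⟨y, hy⟩ := hp (q x)
    have : x - a y ∈ LinearMap.ker q := by
      rw [LinearMap.mem_ker, map_sub, sub_eq_zero, ← hy, ← ha]; rfl
    rw [hiq] at this
    obtain ⟨k, hk⟩ := this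
    exact ⟨(y, k), by simp [s, hk]⟩
  let t : P0 × K →ₗ[R] N := g.coprod h
  have hst : LinearMap.ker s ≤ LinearMap.ker t := by
    rintro ⟨y, k⟩ hyk
    have hyk : a y + i k = 0 := by simpa [s] using hyk
    have : y ∈ LinearMap.ker p := by
      rw [LinearMap.mem_ker, ← ha]
      have := congrArg q hyk
      simpa [hqi] using this
    rw [hex] at this
    obtain ⟨z, rfl⟩ := this
    have hk : k = - b z := by
      apply hi
      have := LinearMap.congr_fun hb z
      simp only [LinearMap.comp_apply] at this
      rw [map_neg, this]
      exact (neg_eq_of_add_eq_zero_right hyk).symm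
    have := LinearMap.congr_fun hg z
    simp only [LinearMap.comp_apply] at this
    simp [t, hk, this]
  let h' : X →ₗ[R] N := (LinearMap.ker s).liftQ t hst ∘ₗ
    (s.quotKerEquivOfSurjective hs).symm.toLinearMap
  refine ⟨h', LinearMap.ext fun k => ?_⟩
  have : i k = s.quotKerEquivOfSurjective hs (Submodule.Quotient.mk (0, k)) := by
    rw [LinearMap.quotKerEquivOfSurjective_apply_mk]; simp [s]
  simp only [h', LinearMap.comp_apply, this, LinearEquiv.coe_coe, LinearEquiv.symm_apply_apply]
  simp [t]

lemma lift_aux [Module.Projective R P0] [Module.Projective R P1]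
    (d1 : P1 →ₗ[R] P0) (p : P0 →ₗ[R] T)
    (hex : LinearMap.ker p = LinearMap.range d1)
    (i : K →ₗ[R] X) (q : X →ₗ[R] T) (hq : Function.Surjective q)
    (hiq : LinearMap.ker q = LinearMap.range i) :
    ∃ (a : P0 →ₗ[R] X) (b : P1 →ₗ[R] K), q ∘ₗ a = p ∧ i ∘ₗ b = a ∘ₗ d1 := by
  obtain ⟨a, ha⟩ := Module.projective_lifting_property q p hq
  have hr : ∀ z, (a ∘ₗ d1) z ∈ LinearMap.range i := fun z => by
    rw [← hiq, LinearMap.mem_ker]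
    have : d1 z ∈ LinearMap.ker p := hex ▸ ⟨z, rfl⟩
    rw [← ha] at this
    exact this
  obtain ⟨b, hb⟩ := Module.projective_lifting_property i.rangeRestrict
    ((a ∘ₗ d1).codRestrict _ hr) i.surjective_rangeRestrict
  exact ⟨a, b, ha, LinearMap.ext fun z => congrArg Subtype.val (LinearMap.congr_fun hb z)⟩

end LinAlg

lemma ext1_extend (X N : ModuleCat.{u} R) (hX : Subsingleton (ExtM R X N 1))
    {K E : Type*} [AddCommGroup K] [Module R K] [AddCommGroup E] [Module R E]
    (i : K →ₗ[R] E) (q : E →ₗ[R] ↥X) (hi : Function.Injective i) (hq : Function.Surjective q)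
    (hiq : LinearMap.ker q = LinearMap.range i) (f : K →ₗ[R] ↥N) :
    ∃ f' : E →ₗ[R] ↥N, f' ∘ₗ i = f := by
  obtain ⟨P0, P1, P2, d2, d1, p, Θ, _, _, hp, hex1, hex2, hΘ, hΘ0⟩ := resolution_ext1 R X N
  obtain ⟨a, b, ha, hb⟩ := lift_aux d1 p hex1 i q hq hiq
  have hc : f ∘ₗ b ∈ LinearMap.ker (LinearMap.lcomp R ↥N d2) := by
    rw [LinearMap.mem_ker]
    ext z
    have : d1 (d2 z) = 0 := by
      have : d2 z ∈ LinearMap.ker d1 := hex2 ▸ ⟨z, rfl⟩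
      exact this
    have h1 := LinearMap.congr_fun hb (d2 z)
    simp only [LinearMap.comp_apply, this, map_zero] at h1
    have h2 : b (d2 z) = 0 := hi (by rw [h1, map_zero])
    simp [h2]
  obtain ⟨g, hg⟩ := (hΘ0 ⟨_, hc⟩).1 (Subsingleton.elim _ _)
  exact extend_aux d1 p hp hex1 i q hi hiq a b ha hb f g hg

lemma ext1_quot (T N X : ModuleCat.{u} R) (hX : Subsingleton (ExtM R X N 1))
    {K : Type u} [AddCommGroup K] [Module R K]
    (i : K →ₗ[R] ↥X) (q : ↥X →ₗ[R] ↥T) (hi : Function.Injective i) (hq : Function.Surjective q)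
    (hiq : LinearMap.ker q = LinearMap.range i) :
    ∃ Φ : (K →ₗ[R] ↥N) →ₗ[R] ↥(ExtM R T N 1), Function.Surjective Φ ∧
      ∀ h, Φ h = 0 ↔ ∃ h' : ↥X →ₗ[R] ↥N, h' ∘ₗ i = h := by
  obtain ⟨P0, P1, P2, d2, d1, p, Θ, _, _, hp, hex1, hex2, hΘ, hΘ0⟩ := resolution_ext1 R T N
  obtain ⟨a, b, ha, hb⟩ := lift_aux d1 p hex1 i q hq hiq
  have hqi : ∀ k, q (i k) = 0 := fun k => by
    have : i k ∈ LinearMap.ker q := hiq ▸ ⟨k, rfl⟩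
    exact this
  have hbd : ∀ z, d1 z = 0 → b z = 0 := fun z hz => by
    have h1 := LinearMap.congr_fun hb z
    simp only [LinearMap.comp_apply, hz, map_zero] at h1
    exact hi (by rw [h1, map_zero])
  have hdd : ∀ z, d1 (d2 z) = 0 := fun z => by
    have : d2 z ∈ LinearMap.ker d1 := hex2 ▸ ⟨z, rfl⟩
    exact this
  have hc : ∀ f : K →ₗ[R] ↥N, LinearMap.lcomp R ↥N b f ∈
      LinearMap.ker (LinearMap.lcomp R ↥N d2) := fun f => by
    rw [LinearMap.mem_ker]
    ext z
    simp [hbd _ (hdd z)]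
  refine ⟨Θ ∘ₗ (LinearMap.lcomp R ↥N b).codRestrict _ hc, ?_, ?_⟩
  · intro y
    obtain ⟨f, rfl⟩ := hΘ y
    let w : ↥P1 →ₗ[R] ↥P0 × K := d1.prod (-b)
    let i' := (LinearMap.ker w).liftQ w le_rfl
    have hi' : Function.Injective i' := by
      rw [← LinearMap.ker_eq_bot]
      exact Submodule.ker_liftQ_eq_bot _ _ _ le_rfl
    have hf : LinearMap.ker w ≤ LinearMap.ker f.1 := by
      intro z hz
      have hz1 : z ∈ LinearMap.ker d1 := by
        have hz : w z = 0 := hz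
        exact congrArg Prod.fst hz
      rw [hex2] at hz1
      obtain ⟨v, rfl⟩ := hz1
      exact LinearMap.congr_fun (LinearMap.mem_ker.1 f.2) v
    let q' : ↥P0 × K →ₗ[R] ↥X := a.coprod i
    have hq' : Function.Surjective q' := by
      intro x
      obtain ⟨y, hy⟩ := hp (q x)
      have : x - a y ∈ LinearMap.ker q := by
        rw [LinearMap.mem_ker, map_sub, sub_eq_zero, ← hy, ← ha]; rfl
      rw [hiq] at this
      obtain ⟨k, hk⟩ := this
      exact ⟨(y, k), by simp [q', hk]⟩
    have hex' : LinearMap.ker q' = LinearMap.range i' := by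
      rw [Submodule.range_liftQ]
      apply le_antisymm
      · rintro ⟨y, k⟩ hyk
        have hyk : a y + i k = 0 := by simpa [q'] using hyk
        have : y ∈ LinearMap.ker p := by
          rw [LinearMap.mem_ker, ← ha]
          have := congrArg q hyk
          simpa [hqi] using this
        rw [hex1] at this
        obtain ⟨z, rfl⟩ := this
        refine ⟨z, Prod.ext rfl ?_⟩
        apply hi
        have := LinearMap.congr_fun hb z
        simp only [LinearMap.comp_apply] at this
        change i (- b z) = i k
        rw [map_neg, this]
        exact neg_eq_of_add_eq_zero_right hyk
      · rintro _ ⟨z, rfl⟩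
        have := LinearMap.congr_fun hb z
        simp only [LinearMap.comp_apply] at this
        simp [q', w, this]
    obtain ⟨F, hF⟩ := ext1_extend R X N hX i' q' hi' hq' hex' ((LinearMap.ker w).liftQ f.1 hf)
    refine ⟨-(F ∘ₗ LinearMap.inr R ↥P0 K), ?_⟩
    rw [← sub_eq_zero, LinearMap.comp_apply, ← map_sub, hΘ0]
    refine ⟨-(F ∘ₗ LinearMap.inl R ↥P0 K), ?_⟩
    ext z
    have h1 := LinearMap.congr_fun hF (Submodule.Quotient.mk z)
    have h2 : F (d1 z, - b z) = f.1 z := h1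
    have h3 : F (d1 z, - b z) = F (d1 z, 0) - F (0, b z) := by
      rw [← map_sub]; simp
    simp [← h2, h3]
    abel
  · intro h
    rw [LinearMap.comp_apply, hΘ0]
    constructor
    · rintro ⟨g, hg⟩
      exact extend_aux d1 p hp hex1 i q hi hiq a b ha hb h g hg
    · rintro ⟨h', rfl⟩
      refine ⟨h' ∘ₗ a, ?_⟩
      change (h' ∘ₗ i) ∘ₗ b = _
      rw [LinearMap.comp_assoc, hb, LinearMap.comp_assoc]

lemma bidualityMap_apply' (C M : ModuleCat.{u} R) (x : ↥M) (f : ↥M →ₗ[R] ↥C) :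
    bidualityMap R C M x f = f x := rfl

lemma totRefl_of_equiv (C M M' : ModuleCat.{u} R) (e : ↥M ≃ₗ[R] ↥M')
    (h : IsTotallyCReflexive R C M) : IsTotallyCReflexive R C M' := by
  obtain ⟨h1, h2, h3, h4⟩ := h
  let D : (↥M →ₗ[R] ↥C) ≃ₗ[R] (↥M' →ₗ[R] ↥C) := e.congrLeft ↥C R
  have hD : ∀ f x, D f x = f (e.symm x) := fun f x => rfl
  let DD : ((↥M →ₗ[R] ↥C) →ₗ[R] ↥C) ≃ₗ[R] ((↥M' →ₗ[R] ↥C) →ₗ[R] ↥C) := D.congrLeft ↥C R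
  refine ⟨Module.Finite.equiv e, ?_, fun i hi => ExtM_subsingleton_of_equiv R i C _ _ e.symm (h3 i hi),
    fun i hi => ExtM_subsingleton_of_equiv R i C _ _ D.symm (h4 i hi)⟩
  have : (bidualityMap R C M' : ↥M' → _) = DD ∘ bidualityMap R C M ∘ e.symm := by
    funext x
    ext f
    change f x = (D.symm f) (e.symm x)
    obtain ⟨g, rfl⟩ := D.surjective f
    rw [D.symm_apply_apply, hD]
  rw [this]
  exact DD.bijective.comp (h2.comp e.symm.bijective)

lemma gcdimLE_of_equiv (C : ModuleCat.{u} R) (n : ℕ) (M M' : ModuleCat.{u} R) (e : ↥M ≃ₗ[R] ↥M')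
    (h : gcdimLE R C n M) : gcdimLE R C n M' := by
  cases n with
  | zero => exact totRefl_of_equiv R C M M' e h
  | succ n =>
    obtain ⟨X, K, f, g, hf, hg, hfg, hX, hK⟩ := h
    exact ⟨X, K, f, e.toLinearMap ∘ₗ g, hf, e.surjective.comp hg,
      by rw [LinearEquiv.ker_comp, hfg], hX, hK⟩

lemma gcdim_of_equiv (C M M' : ModuleCat.{u} R) (e : ↥M ≃ₗ[R] ↥M') :
    gcdim R C M = gcdim R C M' := by
  unfold gcdim
  congr 2
  ext n
  exact ⟨gcdimLE_of_equiv R C n M M' e, gcdimLE_of_equiv R C n M' M e.symm⟩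

lemma gradeR_of_equiv (M M' : ModuleCat.{u} R) (e : ↥M ≃ₗ[R] ↥M') :
    gradeR R M = gradeR R M' := by
  unfold gradeR
  congr 2
  ext n
  exact not_congr ⟨ExtM_subsingleton_of_equiv R n _ _ _ e.symm,
    ExtM_subsingleton_of_equiv R n _ _ _ e⟩

lemma biduality_free (C : ModuleCat.{u} R) (hC : IsSemidualizing R C) (P : ModuleCat.{u} R)
    [Module.Finite R ↥P] [Module.Free R ↥P] : Function.Bijective (bidualityMap R C P) := by
  let ι := Module.Free.ChooseBasisIndex R ↥P
  let b : Module.Basis ι R ↥P := Module.Free.chooseBasis R ↥P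
  obtain ⟨_, hhom, _⟩ := hC
  constructor
  · rw [injective_iff_map_eq_zero]
    intro x hx
    apply b.ext_elem
    intro j
    apply hhom.1
    ext c
    have := LinearMap.congr_fun hx ((b.coord j).smulRight c)
    rw [bidualityMap_apply'] at this
    simpa only [LinearMap.smulRight_apply, Module.Basis.coord_apply, LinearMap.zero_apply,
      LinearMap.smul_apply, LinearMap.id_apply, map_zero, Finsupp.zero_apply, zero_smul] using this
  · intro φ
    have hr : ∀ j, ∃ r : R, ∀ c : ↥C, φ ((b.coord j).smulRight c) = r • c := fun j => by
      obtain ⟨r, hr⟩ := hhom.2 (φ ∘ₗ LinearMap.smulRightₗ (b.coord j))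
      exact ⟨r, fun c => (LinearMap.congr_fun hr c).symm⟩
    choose r hr using hr
    refine ⟨∑ j, r j • b j, ?_⟩
    ext f
    have hf : f = ∑ j, (b.coord j).smulRight (f (b j)) := by
      apply b.ext
      intro k
      simp [LinearMap.sum_apply, Finsupp.single_apply]
    rw [bidualityMap_apply']
    conv_rhs => rw [hf]
    simp [hr]

lemma dual_totRefl (C : ModuleCat.{u} R) [IsNoetherianRing R] (hC : IsSemidualizing R C)
    (P : ModuleCat.{u} R) [Module.Finite R ↥P] [Module.Free R ↥P] :
    IsTotallyCReflexive R C (ModuleCat.of R (↥P →ₗ[R] ↥C)) := by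
  have hbi := biduality_free R C hC P
  obtain ⟨hfin, hhom, hext⟩ := id hC
  let δ : ↥P ≃ₗ[R] ((↥P →ₗ[R] ↥C) →ₗ[R] ↥C) := LinearEquiv.ofBijective _ hbi
  refine ⟨inferInstanceAs (Module.Finite R (↥P →ₗ[R] ↥C)), ?_, fun i hi => ?_, fun i hi => ?_⟩
  · let δ' : (((↥P →ₗ[R] ↥C) →ₗ[R] ↥C) →ₗ[R] ↥C) ≃ₗ[R] (↥P →ₗ[R] ↥C) := δ.symm.congrLeft ↥C R
    have h : (bidualityMap R C (ModuleCat.of R (↥P →ₗ[R] ↥C)) : (↥P →ₗ[R] ↥C) → _) = δ'.symm := by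
      funext f
      apply δ'.injective
      rw [LinearEquiv.apply_symm_apply]
      rfl
    rw [h]
    exact δ'.symm.bijective
  · let ι := Module.Free.ChooseBasisIndex R ↥P
    let b : Module.Basis ι R ↥P := Module.Free.chooseBasis R ↥P
    refine ExtM_subsingleton_of_sum R i C _ C (Finset.univ : Finset ι)
      (fun j => ModuleCat.ofHom (LinearMap.applyₗ (b j)))
      (fun j => ModuleCat.ofHom (LinearMap.smulRightₗ (b.coord j))) ?_ (hext i hi)
    apply ModuleCat.hom_ext
    apply LinearMap.ext
    intro (f : ↥P →ₗ[R] ↥C)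
    have hf : ∑ j, (b.coord j).smulRight (f (b j)) = f := by
      apply b.ext
      intro k
      simp [LinearMap.sum_apply, Finsupp.single_apply]
    simp only [ModuleCat.hom_sum, LinearMap.sum_apply]
    exact hf
  · exact ExtM_subsingleton_of_equiv R i C _ P δ.symm
      (ExtM_subsingleton_of_projective R i hi C P inferInstance)

lemma dual_zero (C : ModuleCat.{u} R) [IsNoetherianRing R] (hC : IsSemidualizing R C)
    (M : ModuleCat.{u} R) [Module.Finite R ↥M] (h : Subsingleton (↥M →ₗ[R] R)) :
    Subsingleton (↥M →ₗ[R] ↥C) := by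
  obtain ⟨hfin, hhom, hext⟩ := hC
  have h1 : Subsingleton (↥C →ₗ[R] (↥M →ₗ[R] ↥C)) := by
    refine subsingleton_of_forall_eq 0 fun F => ?_
    let H : R ≃ₗ[R] (↥C →ₗ[R] ↥C) := LinearEquiv.ofBijective (LinearMap.lsmul R ↥C) hhom
    have h2 : H.symm.toLinearMap ∘ₗ F.flip = 0 := Subsingleton.elim _ _
    ext c m
    have h3 := LinearMap.congr_fun h2 m
    have h4 : F.flip m = 0 := by simpa using h3
    exact LinearMap.congr_fun h4 c
  obtain ⟨r, hr, hreg⟩ := IsSMulRegular.subsingleton_linearMap_iff.1 h1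
  have hr0 : r = 0 := by
    apply hhom.1
    ext c
    simp only [LinearMap.smul_apply, LinearMap.id_apply, zero_smul]
    exact Module.mem_annihilator.1 hr c
  subst hr0
  exact IsSMulRegular.zero_iff_subsingleton.1 hreg

/-- over a Noetherian local ring, if `M` is `G_C`-perfect of grade
`n > 0`, then `Tr_C(M)` is reduced `G_C`-perfect of `G_C`-dimension `1`, and
`Ext_R^1(Tr_C(M), C)` is `G_C`-perfect of `G_C`-dimension `n`. -/
theorem statement14 [IsLocalRing R] [IsNoetherianRing R]
    (C : ModuleCat.{u} R) (hC : IsSemidualizing R C)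
    (M : ModuleCat.{u} R) (hMfin : Module.Finite R ↥M)
    (n : ℕ) (hn : 0 < n)
    (hperf : IsGCPerfect R C M) (hgr : gradeR R M = n) :
    ∀ T : ModuleCat.{u} R, IsTransposeC R C M T →
      IsReducedGCPerfect R C T ∧ gcdim R C T = 1 ∧
      IsGCPerfect R C (ExtM R T C 1) ∧ gcdim R C (ExtM R T C 1) = n := by
  rintro T ⟨P1, P0, d, π, ⟨hf1, hf0, ⟨hp0, hπ, -⟩, hdπ, hp1, -⟩, ⟨eT⟩⟩
  have : Module.Free R ↥P1 := Module.free_of_flat_of_isLocalRing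
  have : Module.Free R ↥P0 := Module.free_of_flat_of_isLocalRing
  have hM0 : Subsingleton (↥M →ₗ[R] ↥C) := by
    refine dual_zero R C hC M (resolution_ext0 R M (ModuleCat.of R R) ?_)
    by_contra hne
    have : gradeR R M ≤ ((0 : ℕ) : ℕ∞) := sInf_le ⟨0, hne, rfl⟩
    rw [hgr] at this
    have := Nat.cast_le.1 this
    omega
  have hMne : ¬ Subsingleton ↥M := by
    intro hs
    have : gradeR R M = ⊤ := by
      unfold gradeR
      rw [sInf_eq_top]
      rintro _ ⟨i, hi, -⟩
      exact absurd (ExtM_subsingleton_of_subsingleton R i _ M hs) hi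
    rw [this] at hgr
    exact ENat.top_ne_natCast n hgr
  let X := ModuleCat.of R (↥P1 →ₗ[R] ↥C)
  let K := ModuleCat.of R (↥P0 →ₗ[R] ↥C)
  have hX := dual_totRefl R C hC P1
  have hK := dual_totRefl R C hC P0
  let i : ↥K →ₗ[R] ↥X := LinearMap.lcomp R ↥C d
  have hi : Function.Injective i := by
    rw [injective_iff_map_eq_zero]
    intro (f : ↥P0 →ₗ[R] ↥C) hf
    have hf : f ∘ₗ d = 0 := hf
    have hk : LinearMap.ker π ≤ LinearMap.ker f := by
      rw [← hdπ]
      rintro _ ⟨z, rfl⟩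
      exact LinearMap.congr_fun hf z
    let f' : ↥M →ₗ[R] ↥C := (LinearMap.ker π).liftQ f hk ∘ₗ
      (π.quotKerEquivOfSurjective hπ).symm.toLinearMap
    have hf' : f' = 0 := Subsingleton.elim _ _
    have hf2 : (LinearMap.ker π).liftQ f hk = 0 := by
      apply LinearMap.ext
      intro z
      have := LinearMap.congr_fun hf' (π.quotKerEquivOfSurjective hπ z)
      simpa only [f', LinearMap.comp_apply, LinearEquiv.coe_coe,
        LinearEquiv.symm_apply_apply, LinearMap.zero_apply] using this
    apply LinearMap.ext
    intro z
    exact LinearMap.congr_fun hf2 (Submodule.Quotient.mk z)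
  let q : ↥X →ₗ[R] ↥T := eT.symm.toLinearMap ∘ₗ Submodule.mkQ _
  have hq : Function.Surjective q := eT.symm.surjective.comp (Submodule.mkQ_surjective _)
  have hiq : LinearMap.ker q = LinearMap.range i := by
    rw [LinearEquiv.ker_comp, Submodule.ker_mkQ]
  have hT1 : gcdimLE R C 1 T := ⟨X, K, i, q, hi, hq, hiq, hX, hK⟩
  obtain ⟨Φ, hΦ, hΦ0⟩ := ext1_quot R T C X (hX.2.2.1 1 one_pos) i q hi hq hiq
  have hb0 := biduality_free R C hC P0
  have hb1 := biduality_free R C hC P1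
  let Ψ : ↥P0 →ₗ[R] ↥(ExtM R T C 1) := Φ ∘ₗ bidualityMap R C P0
  have hΨ : Function.Surjective Ψ := hΦ.comp hb0.2
  have hker : LinearMap.ker π = LinearMap.ker Ψ := by
    rw [← hdπ]
    ext x
    rw [LinearMap.mem_ker]
    change _ ↔ Φ (bidualityMap R C P0 x) = 0
    rw [hΦ0]
    constructor
    · rintro ⟨z, rfl⟩
      exact ⟨bidualityMap R C P1 z, rfl⟩
    · rintro ⟨h', hh⟩
      obtain ⟨z, rfl⟩ := hb1.2 h'
      refine ⟨z, hb0.1 ?_⟩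
      rw [← hh]
      rfl
  let e : ↥M ≃ₗ[R] ↥(ExtM R T C 1) := (π.quotKerEquivOfSurjective hπ).symm ≪≫ₗ
    Submodule.quotEquivOfEq _ _ hker ≪≫ₗ Ψ.quotKerEquivOfSurjective hΨ
  have hE : ¬ Subsingleton (ExtM R T C 1) := fun h => hMne e.toEquiv.subsingleton
  have hgT : gcdim R C T = 1 := by
    apply le_antisymm
    · exact sInf_le ⟨1, hT1, by simp⟩
    · refine le_sInf ?_
      rintro _ ⟨k, hk, rfl⟩
      rcases k with _ | k
      · exact absurd (hk.2.2.1 1 one_pos) hE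
      · simp
  have hrT : rgrade R C T = 1 := by
    apply le_antisymm
    · exact sInf_le ⟨1, ⟨one_pos, hE⟩, by simp⟩
    · refine le_sInf ?_
      rintro _ ⟨k, ⟨hk, -⟩, rfl⟩
      change (1 : ℕ∞) ≤ (k : ℕ∞)
      exact_mod_cast hk
  have hgE := gcdim_of_equiv R C _ _ e
  have hrE := gradeR_of_equiv R _ _ e
  refine ⟨⟨by rw [hgT]; exact ENat.one_ne_top, by rw [hrT, hgT]⟩, hgT, ⟨?_, ?_⟩, ?_⟩
  · rw [← hgE]; exact hperf.1
  · rw [← hgE, ← hrE]; exact hperf.2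
  · rw [← hgE, ← hperf.2, hgr]

end
end

section
/- If M is a non-zero horizontally linked R-module, then grade_R(M) = 0. -/
open CategoryTheory TensorProduct

noncomputable section

universe u

variable (R : Type u) [CommRing R]

/-- If `Ext^0(M, Y)` vanishes, so does `Hom(M, Y)`. -/
theorem hom_eq_zero_of_ext_zero (M Y : ModuleCat.{u} R) (h : Subsingleton (ExtM R M Y 0))
    (f : M ⟶ Y) : f = 0 := by
  let P := projectiveResolution M
  have hz : Limits.IsZero ((P.complex.linearYonedaObj R Y).homology 0) :=
    Limits.IsZero.of_iso (@ModuleCat.isZero_of_subsingleton R _ (ExtM R M Y 0) h)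
      (P.isoExt (R := R) 0 Y).symm
  rw [← HomologicalComplex.exactAt_iff_isZero_homology,
    HomologicalComplex.exactAt_iff' _ 0 0 1 (by simp) (by simp),
    ShortComplex.moduleCat_exact_iff] at hz
  suffices key : ∀ f' : ((ChainComplex.single₀ (ModuleCat.{u} R)).obj M).X 0 ⟶ Y, f' = 0 from
    key f
  intro f'
  let g : P.complex.X 0 ⟶ Y := P.π.f 0 ≫ f'
  have hg : P.complex.d 1 0 ≫ g = 0 := by
    simp only [g]
    rw [← Category.assoc, P.complex_d_comp_π_f_zero, Limits.zero_comp]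
  obtain ⟨x, hx⟩ := hz g hg
  have h0 : (P.complex.linearYonedaObj R Y).d 0 0 = 0 :=
    HomologicalComplex.shape _ _ _ (by simp)
  have hg0 : g = 0 := by
    rw [← hx]
    change (P.complex.linearYonedaObj R Y).d 0 0 x = 0
    rw [h0]; rfl
  have : Epi (P.π.f 0) := inferInstance
  exact (cancel_epi (P.π.f 0)).1 (by rw [Limits.comp_zero]; exact hg0)

/-- a non-zero horizontally linked module has grade `0`. -/
theorem statement15 [IsNoetherianRing R] (hsp : IsSemiperfectRing R)
    (M : ModuleCat.{u} R) (hMfin : Module.Finite R ↥M) (hM0 : Nontrivial ↥M)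
    (hlink : IsHorizontallyLinked R M) :
    gradeR R M = 0 := by
  obtain ⟨L, L2, -, ⟨T, -, ⟨P, π, -, ⟨hP, -, -⟩, ⟨e'⟩⟩⟩, ⟨e⟩⟩ := hlink
  have hns : ¬ Subsingleton (ExtM R M (ModuleCat.of R R) 0) := by
    intro h
    obtain ⟨m, hm⟩ := exists_ne (0 : ↥M)
    let j : ↥M →ₗ[R] ↥P := (LinearMap.ker π).subtype ∘ₗ (e.trans e').toLinearMap
    have hj : Function.Injective j :=
      (LinearMap.ker π).injective_subtype.comp (e.trans e').injective
    have hjm : j m ≠ 0 := fun h0 => hm (hj (by rw [h0, map_zero]))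
    apply hjm
    refine (Module.forall_dual_apply_eq_zero_iff R (j m)).1 fun φ => ?_
    have := hom_eq_zero_of_ext_zero R M (ModuleCat.of R R) h (ModuleCat.ofHom (φ ∘ₗ j))
    have h2 := congrArg (fun q => q.hom m) this
    exact h2
  unfold gradeR
  exact le_antisymm (sInf_le ⟨0, hns, by simp⟩) bot_le

end
end
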